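/- For every ν ∈ ℝ, as a → ∞ one has B_ν(a) = √(2π) · 2^{-ν} · a^{ν - 1/2} · e^{-a} · (1 + O(a⁻¹)); equivalently, there exist constants C, A > 0 such that |B_ν(a)·e^{a}·a^{1/2 - ν}·2^{ν}/√(2π) − 1| ≤ C/a for all a ≥ A. -/

import Mathlib

/-!
The substitution `t = (a / 2) * exp u` turns `B_ν(a)` into `2 * (a / 2) ^ ν * K_ν(a)`, where `K_ν`
is the modified Bessel function of the second kind. For `ν = 1 / 2` the substitution
`s = sinh (u / 2)` makes the integral Gaussian, so `K_{1/2}(a) = √(π / (2 * a)) * exp (-a)` exactly: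
this is the leading term for every `ν`. Indeed the integrands of `K_μ(a)` and `K_ν(a)` agree to
second order at `u = 0`, and since `cosh u ≥ 1 + u ^ 2 / 2` their difference is dominated by
`u ^ 2` times a Gaussian of variance `O(1 / a)`, whence `K_μ(a) - K_ν(a) = O(K_{1/2}(a) / a)`.
-/

open Real MeasureTheory Set

section HyperbolicCosine

theorem cosh_eq_one_add_two_mul_sinh_half_sq (u : ℝ) : cosh u = 1 + 2 * sinh (u / 2) ^ 2 := by
  have h := cosh_two_mul (u / 2)
  rw [mul_div_cancel₀ u two_ne_zero, cosh_sq] at h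
  linarith

theorem one_add_sq_div_two_le_cosh (u : ℝ) : 1 + u ^ 2 / 2 ≤ cosh u := by
  have h : (u / 2) ^ 2 ≤ sinh (u / 2) ^ 2 := by
    rw [sq_le_sq, abs_sinh]
    exact self_le_sinh_iff.2 (abs_nonneg _)
  linarith [cosh_eq_one_add_two_mul_sinh_half_sq u]

theorem exp_neg_mul_cosh_le {a : ℝ} (ha : 0 ≤ a) (u : ℝ) :
    exp (-(a * cosh u)) ≤ exp (-a) * exp (-(a / 2) * u ^ 2) := by
  rw [← exp_add, exp_le_exp]
  linarith [mul_le_mul_of_nonneg_left (one_add_sq_div_two_le_cosh u) ha]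

theorem cosh_sub_one_le_of_sq_le {x s : ℝ} (h : x ^ 2 ≤ 2 * s) : cosh x - 1 ≤ s * exp s := by
  have hexp : exp s - 1 ≤ s * exp s := by
    have := mul_le_mul_of_nonneg_right (one_sub_le_exp_neg s) (exp_pos s).le
    rw [← exp_add, neg_add_cancel, exp_zero] at this
    linarith
  calc
    cosh x - 1 ≤ exp (x ^ 2 / 2) - 1 := by gcongr; exact cosh_le_exp_half_sq x
    _ ≤ exp s - 1 := by gcongr; linarith
    _ ≤ s * exp s := hexp

theorem abs_cosh_sub_cosh_le (x y : ℝ) :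
    |cosh x - cosh y| ≤ (x ^ 2 + y ^ 2) / 2 * exp ((x ^ 2 + y ^ 2) / 2) := by
  have hx : cosh x - 1 ≤ (x ^ 2 + y ^ 2) / 2 * exp ((x ^ 2 + y ^ 2) / 2) :=
    cosh_sub_one_le_of_sq_le (by linarith [sq_nonneg y])
  have hy : cosh y - 1 ≤ (x ^ 2 + y ^ 2) / 2 * exp ((x ^ 2 + y ^ 2) / 2) :=
    cosh_sub_one_le_of_sq_le (by linarith [sq_nonneg x])
  rw [abs_le]
  constructor <;> linarith [one_le_cosh x, one_le_cosh y]

end HyperbolicCosine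

section ChangeOfVariables

variable {E : Type*} [NormedAddCommGroup E] [NormedSpace ℝ E]

theorem integral_comp_exp (f : ℝ → E) : ∫ u, exp u • f (exp u) = ∫ t in Ioi 0, f t := by
  symm
  rw [← range_exp, ← image_univ]
  simpa only [abs_exp, setIntegral_univ] using
    integral_image_eq_integral_abs_deriv_smul MeasurableSet.univ
      (fun u _ ↦ (hasDerivAt_exp u).hasDerivWithinAt) exp_injective.injOn f

theorem integral_comp_mul_exp {c : ℝ} (hc : 0 < c) (f : ℝ → E) :
    ∫ u, f (c * exp u) = ∫ t in Ioi 0, t⁻¹ • f t := by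
  calc
    ∫ u, f (c * exp u) = ∫ u, exp u • (exp u)⁻¹ • f (c * exp u) := by
      simp only [smul_inv_smul₀ (exp_pos _).ne']
    _ = ∫ t in Ioi 0, t⁻¹ • f (c * t) := integral_comp_exp fun t ↦ t⁻¹ • f (c * t)
    _ = c • ∫ t in Ioi 0, (c * t)⁻¹ • f (c * t) := by
      simp only [mul_inv, mul_smul, integral_smul, smul_inv_smul₀ hc.ne']
    _ = ∫ t in Ioi 0, t⁻¹ • f t := by
      simpa only [mul_zero] using integral_comp_mul_left_Ioi' (fun t ↦ t⁻¹ • f t) 0 hc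

theorem integral_comp_sinh (f : ℝ → E) : ∫ u, cosh u • f (sinh u) = ∫ s, f s := by
  rw [← setIntegral_univ (f := f), ← sinh_surjective.range_eq, ← image_univ]
  simpa only [abs_of_pos (cosh_pos _), setIntegral_univ] using
    (integral_image_eq_integral_abs_deriv_smul MeasurableSet.univ
      (fun u _ ↦ (hasDerivAt_sinh u).hasDerivWithinAt) sinh_injective.injOn f).symm

end ChangeOfVariables

/-- The modified Bessel function of the second kind `K_ν(a)` of real order `ν` at `a > 0`, as the
integral of `cosh (ν * u) * exp (-a * cosh u)` over `u > 0`. It is written as half the integral over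
the whole line, which is the form that Gaussian integrals apply to. The integral diverges for
`a ≤ 0`, where the value is the junk value `0`. -/
noncomputable def besselK (ν a : ℝ) : ℝ :=
  (∫ u, cosh (ν * u) * exp (-(a * cosh u))) / 2

theorem integrable_exp_mul_mul_exp_neg_mul_cosh {a : ℝ} (ha : 0 < a) (ν : ℝ) :
    Integrable fun u ↦ exp (ν * u) * exp (-(a * cosh u)) := by
  have hgauss : Integrable fun u : ℝ ↦ exp (ν ^ 2 / a - a) * exp (-(a / 4) * u ^ 2) :=
    (integrable_exp_neg_mul_sq (by positivity)).const_mul _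
  refine hgauss.mono' (by fun_prop) (.of_forall fun u ↦ ?_)
  have hsq : ν * u ≤ ν ^ 2 / a + a / 4 * u ^ 2 := by
    have : ν ^ 2 / a + a / 4 * u ^ 2 - ν * u = (ν - a / 2 * u) ^ 2 / a := by field_simp; ring
    linarith [show 0 ≤ (ν - a / 2 * u) ^ 2 / a by positivity]
  rw [norm_of_nonneg (by positivity)]
  calc
    exp (ν * u) * exp (-(a * cosh u))
      ≤ exp (ν ^ 2 / a + a / 4 * u ^ 2) * (exp (-a) * exp (-(a / 2) * u ^ 2)) := by
        gcongr
        exact exp_neg_mul_cosh_le ha.le u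
    _ = exp (ν ^ 2 / a - a) * exp (-(a / 4) * u ^ 2) := by
        simp only [← exp_add]
        ring_nf

theorem integrable_cosh_mul_mul_exp_neg_mul_cosh {a : ℝ} (ha : 0 < a) (ν : ℝ) :
    Integrable fun u ↦ cosh (ν * u) * exp (-(a * cosh u)) := by
  refine (((integrable_exp_mul_mul_exp_neg_mul_cosh ha ν).add
    (integrable_exp_mul_mul_exp_neg_mul_cosh ha (-ν))).div_const 2).congr (.of_forall fun u ↦ ?_)
  simp only [Pi.add_apply, cosh_eq (ν * u), neg_mul]
  ring

theorem integral_exp_mul_mul_exp_neg_mul_cosh {a : ℝ} (ha : 0 < a) (ν : ℝ) :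
    ∫ u, exp (ν * u) * exp (-(a * cosh u)) = 2 * besselK ν a := by
  have hint := integrable_exp_mul_mul_exp_neg_mul_cosh ha
  have hsymm : ∫ u, exp (-ν * u) * exp (-(a * cosh u)) =
      ∫ u, exp (ν * u) * exp (-(a * cosh u)) := by
    rw [← integral_neg_eq_self]
    simp only [neg_mul_neg, cosh_neg]
  have hcosh (u : ℝ) : cosh (ν * u) * exp (-(a * cosh u)) =
      (exp (ν * u) * exp (-(a * cosh u)) + exp (-ν * u) * exp (-(a * cosh u))) / 2 := by
    rw [cosh_eq (ν * u), neg_mul]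
    ring
  simp only [besselK, hcosh]
  rw [integral_div, integral_add (hint ν) (hint (-ν)), hsymm]
  ring

theorem integral_rpow_mul_exp_neg_mul_exp_neg_sq_div {a : ℝ} (ha : 0 < a) (ν : ℝ) :
    ∫ t in Ioi (0 : ℝ), t ^ ν * exp (-t) * exp (-(a ^ 2) / (4 * t)) / t =
      2 * (a / 2) ^ ν * besselK ν a := by
  have hexponent (u : ℝ) :
      -(a / 2 * exp u) + -(a ^ 2) / (4 * (a / 2 * exp u)) = -(a * cosh u) := by
    rw [cosh_eq, exp_neg]
    field_simp
    ring
  calc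
    ∫ t in Ioi (0 : ℝ), t ^ ν * exp (-t) * exp (-(a ^ 2) / (4 * t)) / t
      = ∫ u, (a / 2 * exp u) ^ ν * exp (-(a / 2 * exp u)) *
          exp (-(a ^ 2) / (4 * (a / 2 * exp u))) := by
        rw [integral_comp_mul_exp (half_pos ha) fun t ↦
          t ^ ν * exp (-t) * exp (-(a ^ 2) / (4 * t))]
        simp only [smul_eq_mul, div_eq_inv_mul]
    _ = ∫ u, (a / 2) ^ ν * (exp (ν * u) * exp (-(a * cosh u))) := by
        congr with u
        rw [mul_assoc, ← exp_add, hexponent, mul_rpow (by positivity) (by positivity), ← exp_mul,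
          mul_comm u, mul_assoc]
    _ = 2 * (a / 2) ^ ν * besselK ν a := by
        rw [integral_const_mul, integral_exp_mul_mul_exp_neg_mul_cosh ha]
        ring

theorem besselK_one_half (a : ℝ) : besselK (1 / 2) a = √(π / (2 * a)) * exp (-a) := by
  have hcosh (u : ℝ) : cosh (1 / 2 * u) * exp (-(a * cosh u)) =
      exp (-a) * (cosh (u / 2) • exp (-(2 * a) * sinh (u / 2) ^ 2)) := by
    rw [cosh_eq_one_add_two_mul_sinh_half_sq u, one_div_mul_eq_div, smul_eq_mul, mul_left_comm,
      ← exp_add]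
    ring_nf
  simp only [besselK, hcosh, integral_const_mul]
  rw [Measure.integral_comp_div (fun v ↦ cosh v • exp (-(2 * a) * sinh v ^ 2)),
    integral_comp_sinh fun s ↦ exp (-(2 * a) * s ^ 2), integral_gaussian, abs_two, smul_eq_mul]
  ring

theorem abs_cosh_sub_cosh_mul_exp_neg_mul_cosh_le {a μ ν : ℝ} (ha : 0 < a)
    (h : 4 * (μ ^ 2 + ν ^ 2) ≤ a) (u : ℝ) :
    |cosh (μ * u) - cosh (ν * u)| * exp (-(a * cosh u)) ≤
      2 * (μ ^ 2 + ν ^ 2) / a * exp (-a) * exp (-(a / 8) * u ^ 2) := by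
  set c := (μ ^ 2 + ν ^ 2) / 2 with hc
  have hmean : ((μ * u) ^ 2 + (ν * u) ^ 2) / 2 = c * u ^ 2 := by
    rw [hc]
    ring
  have hdiff : |cosh (μ * u) - cosh (ν * u)| ≤ c * u ^ 2 * exp (c * u ^ 2) := by
    simpa only [hmean] using abs_cosh_sub_cosh_le (μ * u) (ν * u)
  have hca : c ≤ a / 8 := by linarith
  have hsq : u ^ 2 ≤ 4 / a * exp (a / 4 * u ^ 2) := by
    calc
      u ^ 2 = 4 / a * (a / 4 * u ^ 2) := by field_simp
      _ ≤ 4 / a * exp (a / 4 * u ^ 2) := by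
        gcongr
        linarith [add_one_le_exp (a / 4 * u ^ 2)]
  calc
    |cosh (μ * u) - cosh (ν * u)| * exp (-(a * cosh u))
      ≤ c * u ^ 2 * exp (c * u ^ 2) * (exp (-a) * exp (-(a / 2) * u ^ 2)) := by
        gcongr
        exact exp_neg_mul_cosh_le ha.le u
    _ ≤ c * (4 / a * exp (a / 4 * u ^ 2)) * exp (a / 8 * u ^ 2) *
          (exp (-a) * exp (-(a / 2) * u ^ 2)) := by gcongr
    _ = 4 * c / a * exp (-a) *
          (exp (a / 4 * u ^ 2) * exp (a / 8 * u ^ 2) * exp (-(a / 2) * u ^ 2)) := by ring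
    _ = 2 * (μ ^ 2 + ν ^ 2) / a * exp (-a) * exp (-(a / 8) * u ^ 2) := by
        simp only [← exp_add, hc]
        ring_nf

theorem abs_besselK_sub_besselK_le {a μ ν : ℝ} (ha : 0 < a) (h : 4 * (μ ^ 2 + ν ^ 2) ≤ a) :
    |besselK μ a - besselK ν a| ≤ 4 * (μ ^ 2 + ν ^ 2) / a * besselK (1 / 2) a := by
  have hsqrt : √(π / (a / 8)) = 4 * √(π / (2 * a)) := by
    rw [show π / (a / 8) = 4 ^ 2 * (π / (2 * a)) by field_simp; norm_num,
      sqrt_mul (by positivity), sqrt_sq (by norm_num)]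
  have hgauss : Integrable fun u : ℝ ↦
      2 * (μ ^ 2 + ν ^ 2) / a * exp (-a) * exp (-(a / 8) * u ^ 2) :=
    (integrable_exp_neg_mul_sq (by positivity)).const_mul _
  have hbound : |∫ u, (cosh (μ * u) * exp (-(a * cosh u)) - cosh (ν * u) * exp (-(a * cosh u)))| ≤
      ∫ u : ℝ, 2 * (μ ^ 2 + ν ^ 2) / a * exp (-a) * exp (-(a / 8) * u ^ 2) := by
    rw [← Real.norm_eq_abs]
    refine norm_integral_le_of_norm_le hgauss (.of_forall fun u ↦ ?_)
    rw [← sub_mul, Real.norm_eq_abs, abs_mul, abs_exp]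
    exact abs_cosh_sub_cosh_mul_exp_neg_mul_cosh_le ha h u
  rw [integral_sub (integrable_cosh_mul_mul_exp_neg_mul_cosh ha μ)
    (integrable_cosh_mul_mul_exp_neg_mul_cosh ha ν), integral_const_mul, integral_gaussian,
    hsqrt] at hbound
  rw [besselK_one_half, besselK, besselK, ← sub_div, abs_div, abs_two, div_le_iff₀ two_pos]
  exact hbound.trans_eq (by ring)

theorem abs_besselK_div_besselK_one_half_sub_one_le {a ν : ℝ} (h : 4 * ν ^ 2 + 1 ≤ a) :
    |besselK ν a / besselK (1 / 2) a - 1| ≤ (4 * ν ^ 2 + 1) / a := by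
  have ha : 0 < a := by linarith [sq_nonneg ν]
  have hpos : 0 < besselK (1 / 2) a := by
    rw [besselK_one_half]
    positivity
  rw [div_sub_one hpos.ne', abs_div, abs_of_pos hpos, div_le_iff₀ hpos]
  rw [show 4 * ν ^ 2 + 1 = 4 * (ν ^ 2 + (1 / 2) ^ 2) by ring] at h ⊢
  exact abs_besselK_sub_besselK_le ha h

theorem stmt3 (ν : ℝ) :
    ∃ C A : ℝ, 0 < C ∧ 0 < A ∧ ∀ a : ℝ, A ≤ a →
      |(∫ t in Set.Ioi (0:ℝ), t ^ ν * Real.exp (-t) * Real.exp (-(a ^ 2) / (4 * t)) / t) *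
          Real.exp a * a ^ (1 / 2 - ν) * (2:ℝ) ^ ν / Real.sqrt (2 * π) - 1| ≤ C / a := by
  refine ⟨4 * ν ^ 2 + 1, 4 * ν ^ 2 + 1, by positivity, by positivity, fun a h ↦ ?_⟩
  have ha : 0 < a := by linarith [sq_nonneg ν]
  have hnormalized : 2 * (a / 2) ^ ν * besselK ν a * exp a * a ^ (1 / 2 - ν) * 2 ^ ν / √(2 * π) =
      besselK ν a / besselK (1 / 2) a := by
    rw [besselK_one_half, sqrt_div pi_pos.le, sqrt_mul zero_le_two, sqrt_mul zero_le_two,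
      div_rpow ha.le zero_le_two, rpow_sub ha, ← sqrt_eq_rpow, exp_neg]
    field_simp
    rw [sq_sqrt zero_le_two, mul_comm]
  rw [integral_rpow_mul_exp_neg_mul_exp_neg_sq_div ha, hnormalized]
  exact abs_besselK_div_besselK_one_half_sub_one_le h
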